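/- Let n ≥ 2, let 0 < θ < π/2 and set δ := (π−θ)/2. Let C be a θ-code contained in the closed hemisphere Cap(n,π/2) = {x ∈ S^{n−1} : x_n ≥ 0}. Then |{x ∈ C : dist(x,e) ≥ δ}| + 2·|{x ∈ C : dist(x,e) < δ}| ≤ A(n,θ). -/

import Mathlib

noncomputable section

/-- The "North pole" `(0, …, 0, 1)` of the unit sphere in `ℝ^n`. -/
def north (n : ℕ) : EuclideanSpace ℝ (Fin n) :=
  if h : 0 < n then EuclideanSpace.single ⟨n - 1, Nat.sub_lt h Nat.one_pos⟩ 1 else 0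

/-- Angular distance between two points: `arccos ⟨x, y⟩`. -/
def aDist {n : ℕ} (x y : EuclideanSpace ℝ (Fin n)) : ℝ := Real.arccos (inner ℝ x y : ℝ)

/-- A finite set of unit vectors with pairwise angular distance at least `θ`. -/
def IsCode {n : ℕ} (θ : ℝ) (C : Finset (EuclideanSpace ℝ (Fin n))) : Prop :=
  (∀ x ∈ C, ‖x‖ = 1) ∧ ∀ x ∈ C, ∀ y ∈ C, x ≠ y → θ ≤ aDist x y

/-- `A(n, θ)`: maximal size of a `θ`-code on the unit sphere `S^{n-1} ⊂ ℝ^n`. -/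
def sphereMax (n : ℕ) (θ : ℝ) : ℕ :=
  sSup {M | ∃ C : Finset (EuclideanSpace ℝ (Fin n)), IsCode θ C ∧ C.card = M}

/-- `A(n, θ, φ)`: maximal size of a `θ`-code in the cap of angular radius `φ` about the
North pole. -/
def capMax (n : ℕ) (θ φ : ℝ) : ℕ :=
  sSup {M | ∃ C : Finset (EuclideanSpace ℝ (Fin n)), IsCode θ C ∧
    (∀ x ∈ C, aDist x (north n) ≤ φ) ∧ C.card = M}

/-- `A(n, θ, [ψ, φ])`: maximal size of a `θ`-code in the strip `Z(n, [ψ, φ])`. -/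
def stripMax (n : ℕ) (θ ψ φ : ℝ) : ℕ :=
  sSup {M | ∃ C : Finset (EuclideanSpace ℝ (Fin n)), IsCode θ C ∧
    (∀ x ∈ C, ψ ≤ aDist x (north n) ∧ aDist x (north n) ≤ φ) ∧ C.card = M}

/-- `m(n, d)`: maximal number of points in the closed unit ball of `ℝ^n` with pairwise
Euclidean distances at least `d`. -/
def ballMax (n : ℕ) (d : ℝ) : ℕ :=
  sSup {M | ∃ C : Finset (EuclideanSpace ℝ (Fin n)), (∀ x ∈ C, ‖x‖ ≤ 1) ∧
    (∀ x ∈ C, ∀ y ∈ C, x ≠ y → d ≤ dist x y) ∧ C.card = M}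

/-- `ω(θ, α, β) = arccos((cos θ - cos α cos β) / (sin α sin β))`. -/
def omega2 (θ α β : ℝ) : ℝ :=
  Real.arccos ((Real.cos θ - Real.cos α * Real.cos β) / (Real.sin α * Real.sin β))

/-- `ω(θ, α) := ω(θ, α, α)`. -/
def omega1 (θ α : ℝ) : ℝ := omega2 θ α α

end

/-!
Reflect the points of `C` lying closer than `δ = (π - θ) / 2` to the pole `e` in the equatorial
hyperplane `e^⊥`, and add the mirror images to `C`; this counts each such point twice. The enlarged
set is still a `θ`-code. Reflecting one of two points of the hemisphere can only move them apart,
so a mirror image keeps the distance `θ` from every other point of `C`. Its distance from the point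
it came from is at least `π - 2 dist(x, e) ≥ π - 2δ = θ`, by the triangle inequality for angles.
-/

open InnerProductGeometry Metric Real
open scoped NNReal RealInnerProductSpace

section Reflection

variable {E : Type*} [NormedAddCommGroup E] [InnerProductSpace ℝ E]

lemma inner_nonneg_of_angle_le_pi_div_two {x y : E} (h : angle x y ≤ π / 2) : 0 ≤ ⟪x, y⟫ := by
  rw [← cos_angle_mul_norm_mul_norm]
  have hcos : 0 ≤ cos (angle x y) :=
    cos_nonneg_of_neg_pi_div_two_le_of_le (by linarith [angle_nonneg x y, pi_pos]) h
  positivity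

lemma angle_reflection_orthogonal_singleton_right (x e : E) :
    angle ((ℝ ∙ e)ᗮ.reflection x) e = π - angle x e := by
  have h := (ℝ ∙ e)ᗮ.reflection.toLinearIsometry.angle_map x e
  rw [LinearIsometryEquiv.coe_toLinearIsometry,
    Submodule.reflection_orthogonalComplement_singleton_eq_neg, angle_neg_right] at h
  linarith

lemma pi_sub_two_mul_angle_le_angle_reflection (x e : E) :
    π - 2 * angle x e ≤ angle ((ℝ ∙ e)ᗮ.reflection x) x := by
  have h := angle_le_angle_add_angle ((ℝ ∙ e)ᗮ.reflection x) x e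
  rw [angle_reflection_orthogonal_singleton_right] at h
  linarith

lemma inner_reflection_orthogonal_singleton (x y e : E) :
    ⟪(ℝ ∙ e)ᗮ.reflection x, y⟫ = ⟪x, y⟫ - 2 * (⟪x, e⟫ * ⟪y, e⟫ / ‖e‖ ^ 2) := by
  rw [Submodule.reflection_orthogonal_apply, Submodule.reflection_singleton_apply, neg_sub,
    inner_sub_left, two_nsmul, inner_add_left, real_inner_smul_left, real_inner_comm x e,
    real_inner_comm y e]
  simp only [RCLike.ofReal_real_eq_id, id_eq]
  ring

lemma angle_le_angle_reflection {x y e : E} (hx : angle x e ≤ π / 2) (hy : angle y e ≤ π / 2) :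
    angle x y ≤ angle ((ℝ ∙ e)ᗮ.reflection x) y := by
  have hxe := inner_nonneg_of_angle_le_pi_div_two hx
  have hye := inner_nonneg_of_angle_le_pi_div_two hy
  have hle : ⟪(ℝ ∙ e)ᗮ.reflection x, y⟫ ≤ ⟪x, y⟫ := by
    rw [inner_reflection_orthogonal_singleton]
    exact sub_le_self _ (by positivity)
  unfold angle
  rw [LinearIsometryEquiv.norm_map]
  gcongr

lemma pairwise_le_angle_union_image_reflection {θ : ℝ} {e : E} {C N : Set E}
    (hC : C.Pairwise fun x y => θ ≤ angle x y) (hcap : ∀ x ∈ C, angle x e ≤ π / 2)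
    (hNC : N ⊆ C) (hN : ∀ x ∈ N, angle x e ≤ (π - θ) / 2) :
    (C ∪ (ℝ ∙ e)ᗮ.reflection '' N).Pairwise fun x y => θ ≤ angle x y := by
  have hsymm : Std.Symm fun x y : E => θ ≤ angle x y := ⟨fun x y h => by rwa [angle_comm]⟩
  refine Set.pairwise_union_of_symm.2 ⟨hC, ?_, ?_⟩
  · rintro _ ⟨x, hx, rfl⟩ _ ⟨y, hy, rfl⟩ hxy
    exact (hC (hNC hx) (hNC hy) (ne_of_apply_ne _ hxy)).trans_eq
      ((ℝ ∙ e)ᗮ.reflection.toLinearIsometry.angle_map x y).symm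
  · rintro y hy _ ⟨x, hx, rfl⟩ -
    rw [angle_comm]
    obtain rfl | hxy := eq_or_ne x y
    · linarith [hN x hx, pi_sub_two_mul_angle_le_angle_reflection x e]
    · exact (hC (hNC hx) hy hxy).trans (angle_le_angle_reflection (hcap x (hNC hx)) (hcap y hy))

lemma disjoint_image_reflection {e : E} {C N : Set E} (hcap : ∀ x ∈ C, angle x e ≤ π / 2)
    (hN : ∀ x ∈ N, angle x e < π / 2) : Disjoint C ((ℝ ∙ e)ᗮ.reflection '' N) := by
  rw [Set.disjoint_right]
  rintro _ ⟨x, hx, rfl⟩ hxC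
  have h := hcap _ hxC
  rw [angle_reflection_orthogonal_singleton_right] at h
  linarith [hN x hx]

end Reflection

section Packing

lemma packingNumber_ne_top_of_totallyBounded {X : Type*} [PseudoEMetricSpace X] {s : Set X}
    {ε : ℝ≥0} (hε : ε ≠ 0) (hs : TotallyBounded s) : packingNumber ε s ≠ ⊤ := by
  obtain ⟨t, -, ht, hst⟩ := exists_finite_isCover_of_totallyBounded (half_pos hε.bot_lt).ne' hs
  refine ne_top_of_le_ne_top (Set.encard_ne_top_iff.2 ht) ?_
  calc packingNumber ε s = packingNumber (2 * (ε / 2)) s := by rw [mul_div_cancel₀ ε two_ne_zero]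
    _ ≤ externalCoveringNumber (ε / 2) s := packingNumber_two_mul_le_externalCoveringNumber _ _
    _ ≤ t.encard := hst.externalCoveringNumber_le_encard

variable {E : Type*} [NormedAddCommGroup E] [InnerProductSpace ℝ E]

lemma norm_sub_eq_two_mul_sin_half_angle {x y : E} (hx : ‖x‖ = 1) (hy : ‖y‖ = 1) :
    ‖x - y‖ = 2 * sin (angle x y / 2) := by
  have hsin : 0 ≤ sin (angle x y / 2) :=
    sin_nonneg_of_nonneg_of_le_pi (by linarith [angle_nonneg x y])
      (by linarith [angle_le_pi x y, pi_pos])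
  rw [← sq_eq_sq₀ (norm_nonneg _) (by positivity), norm_sub_sq_real, hx, hy,
    inner_eq_cos_angle_of_norm_eq_one hx hy, mul_pow, sin_sq_eq_half_sub,
    mul_div_cancel₀ _ two_ne_zero]
  ring

lemma two_div_pi_mul_angle_le_norm_sub {x y : E} (hx : ‖x‖ = 1) (hy : ‖y‖ = 1) :
    2 / π * angle x y ≤ ‖x - y‖ := by
  rw [norm_sub_eq_two_mul_sin_half_angle hx hy]
  linarith [mul_le_sin (x := angle x y / 2) (by linarith [angle_nonneg x y])
    (by linarith [angle_le_pi x y])]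

lemma isSeparated_of_pairwise_le_angle {θ : ℝ} (hθ : 0 < θ) {C : Set E}
    (hunit : ∀ x ∈ C, ‖x‖ = 1) (hC : C.Pairwise fun x y => θ ≤ angle x y) :
    IsSeparated (θ / π).toNNReal C := by
  intro x hx y hy hxy
  have hdist : θ / π < dist x y := calc
    θ / π < 2 / π * θ := by rw [div_mul_eq_mul_div]; gcongr; linarith
    _ ≤ 2 / π * angle x y := by gcongr; exact hC hx hy hxy
    _ ≤ ‖x - y‖ := two_div_pi_mul_angle_le_norm_sub (hunit x hx) (hunit y hy)
    _ = dist x y := (dist_eq_norm x y).symm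
  rw [edist_dist]
  exact (ENNReal.ofReal_lt_ofReal_iff_of_nonneg (by positivity)).2 hdist

lemma bddAbove_card_of_pairwise_le_angle [FiniteDimensional ℝ E] {θ : ℝ} (hθ : 0 < θ) :
    BddAbove {M | ∃ C : Finset E, ((∀ x ∈ C, ‖x‖ = 1) ∧
      (C : Set E).Pairwise fun x y => θ ≤ angle x y) ∧ C.card = M} := by
  have hε : (θ / π).toNNReal ≠ 0 := (toNNReal_pos.2 (by positivity)).ne'
  obtain ⟨k, hk⟩ := ENat.ne_top_iff_exists.1 <| packingNumber_ne_top_of_totallyBounded hε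
    (isCompact_sphere (0 : E) 1).totallyBounded
  refine ⟨k, ?_⟩
  rintro _ ⟨C, ⟨hunit, hC⟩, rfl⟩
  have hle := (isSeparated_of_pairwise_le_angle hθ hunit hC).encard_le_packingNumber
    (A := sphere 0 1) fun x hx => mem_sphere_zero_iff_norm.2 (hunit x hx)
  rwa [← hk, Set.encard_coe_eq_coe_finsetCard, Nat.cast_le] at hle

end Packing

section Code

variable {n : ℕ} {θ : ℝ} {C : Finset (EuclideanSpace ℝ (Fin n))} {e : EuclideanSpace ℝ (Fin n)}

lemma aDist_eq_angle {x y : EuclideanSpace ℝ (Fin n)} (hx : ‖x‖ = 1) (hy : ‖y‖ = 1) :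
    aDist x y = angle x y := by
  rw [aDist, angle, hx, hy, mul_one, div_one]

lemma isCode_iff_pairwise_le_angle :
    IsCode θ C ↔ (∀ x ∈ C, ‖x‖ = 1) ∧
      (C : Set (EuclideanSpace ℝ (Fin n))).Pairwise fun x y => θ ≤ angle x y := by
  refine and_congr_right fun hunit => forall₄_congr fun x hx y hy => ?_
  rw [aDist_eq_angle (hunit x hx) (hunit y hy)]

lemma IsCode.card_le_sphereMax (hθ : 0 < θ) (hC : IsCode θ C) : C.card ≤ sphereMax n θ := by
  refine le_csSup ?_ ⟨C, hC, rfl⟩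
  simpa only [isCode_iff_pairwise_le_angle] using bddAbove_card_of_pairwise_le_angle hθ

lemma IsCode.union_image_reflection [DecidableEq (EuclideanSpace ℝ (Fin n))] (hC : IsCode θ C)
    (hcap : ∀ x ∈ C, angle x e ≤ π / 2) {N : Finset (EuclideanSpace ℝ (Fin n))} (hNC : N ⊆ C)
    (hN : ∀ x ∈ N, angle x e ≤ (π - θ) / 2) :
    IsCode θ (C ∪ N.image (ℝ ∙ e)ᗮ.reflection) := by
  rw [isCode_iff_pairwise_le_angle] at hC ⊢
  refine ⟨fun x hx => ?_, ?_⟩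
  · obtain hx | hx := Finset.mem_union.1 hx
    · exact hC.1 x hx
    · obtain ⟨y, hy, rfl⟩ := Finset.mem_image.1 hx
      rw [LinearIsometryEquiv.norm_map, hC.1 y (hNC hy)]
  · rw [Finset.coe_union, Finset.coe_image]
    exact pairwise_le_angle_union_image_reflection hC.2 hcap (Finset.coe_subset.2 hNC) hN

lemma IsCode.card_add_card_le_sphereMax (hθ : 0 < θ) (hC : IsCode θ C)
    (hcap : ∀ x ∈ C, angle x e ≤ π / 2) {N : Finset (EuclideanSpace ℝ (Fin n))} (hNC : N ⊆ C)
    (hN : ∀ x ∈ N, angle x e ≤ (π - θ) / 2) : C.card + N.card ≤ sphereMax n θ := by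
  classical
  have hdisj : Disjoint C (N.image (ℝ ∙ e)ᗮ.reflection) := by
    rw [← Finset.disjoint_coe, Finset.coe_image]
    exact disjoint_image_reflection hcap fun x hx => by linarith [hN x hx]
  rw [← Finset.card_image_of_injective N (ℝ ∙ e)ᗮ.reflection.injective,
    ← Finset.card_union_of_disjoint hdisj]
  exact (hC.union_image_reflection hcap hNC hN).card_le_sphereMax hθ

lemma norm_north (hn : 0 < n) : ‖north n‖ = 1 := by
  rw [north, dif_pos hn, PiLp.norm_single, norm_one]

end Code

open Classical in
theorem stmt15_general {n : ℕ} {θ : ℝ} (hθ : 0 < θ) {e : EuclideanSpace ℝ (Fin n)} (he : ‖e‖ = 1)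
    {C : Finset (EuclideanSpace ℝ (Fin n))} (hC : IsCode θ C)
    (hcap : ∀ x ∈ C, aDist x e ≤ π / 2) :
    (C.filter fun x => (π - θ) / 2 ≤ aDist x e).card +
        2 * (C.filter fun x => aDist x e < (π - θ) / 2).card ≤
      sphereMax n θ := by
  have haDist : ∀ x ∈ C, aDist x e = angle x e := fun x hx => aDist_eq_angle (hC.1 x hx) he
  have hnear : ∀ x ∈ C.filter fun x => aDist x e < (π - θ) / 2, angle x e ≤ (π - θ) / 2 :=
    fun x hx => by
      obtain ⟨hxC, hlt⟩ := Finset.mem_filter.1 hx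
      exact haDist x hxC ▸ hlt.le
  have hdouble := hC.card_add_card_le_sphereMax hθ (fun x hx => haDist x hx ▸ hcap x hx)
    (Finset.filter_subset _ C) hnear
  have hsplit := Finset.card_filter_add_card_filter_not (s := C) fun x => aDist x e < (π - θ) / 2
  simp only [not_lt] at hsplit
  omega

open Classical in
theorem stmt15 (n : ℕ) (hn : 2 ≤ n) (θ : ℝ) (hθ : 0 < θ) (hθ2 : θ < Real.pi / 2)
    (C : Finset (EuclideanSpace ℝ (Fin n))) (hC : IsCode θ C)
    (hCap : ∀ x ∈ C, aDist x (north n) ≤ Real.pi / 2) :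
    (C.filter fun x => (Real.pi - θ) / 2 ≤ aDist x (north n)).card +
        2 * (C.filter fun x => aDist x (north n) < (Real.pi - θ) / 2).card ≤
      sphereMax n θ :=
  stmt15_general hθ (norm_north (by omega)) hC hCap
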